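/- Let T ≥ 2, let p̂ ∈ Ω and let L₁, …, L_T be losses (with the relevant Bayes updates well defined). For any index 1 ≤ i ≤ T−1, swapping the two adjacent losses L_i and L_{i+1} changes the particle-filter output by at most: D(p̂[L₁, …, L_{i−1}, L_i, L_{i+1}, L_{i+2}, …, L_T], p̂[L₁, …, L_{i−1}, L_{i+1}, L_i, L_{i+2}, …, L_T]) ≤ 2ε · C^{T−2} · (C² − 1)/(C − 1). -/

import Mathlib

/-!
Bayes updates multiply densities, so exact updates by two losses commute. By (7), two filter
updates in a row stay within `C ε + ε` of the two exact updates, whichever loss comes first, and the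
triangle inequality through the common exact posterior costs at most `2 (C + 1) ε`. Each loss after
the swapped pair multiplies this by at most `C`, by (6); finally `C + 1 = (C² - 1) / (C - 1)`.
-/

open MeasureTheory

/-- The exact Bayes update of a Borel measure `p` on `ℝ^d` by a loss `L`:
the measure with density `x ↦ e^{-L x} / ∫ e^{-L x'} dp(x')` with respect to `p`
(defined when `∫ e^{-L} dp > 0`). -/
noncomputable def bayesUpdate {d : ℕ} (p : Measure (EuclideanSpace ℝ (Fin d)))
    (L : EuclideanSpace ℝ (Fin d) → ℝ) : Measure (EuclideanSpace ℝ (Fin d)) :=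
  p.withDensity fun x =>
    ENNReal.ofReal (Real.exp (-(L x)) / ∫ x', Real.exp (-(L x')) ∂p)

theorem bayesUpdate_eq_tilted {d : ℕ} (p : Measure (EuclideanSpace ℝ (Fin d)))
    (L : EuclideanSpace ℝ (Fin d) → ℝ) : bayesUpdate p L = p.tilted fun x => -L x :=
  rfl

section ApproximateUpdates

-- `U` is the approximate update and `B` the exact one; both are controlled only at states
-- satisfying `P` and inputs satisfying `Q`.
variable {α β : Type*} {P : α → Prop} {Q : β → Prop} {D : α → α → ℝ} {U B : α → β → α} {C ε : ℝ}
  (hC : 0 ≤ C) (hU : ∀ p a, P p → Q a → P (U p a))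

include hC hU

theorem discrepancy_foldl_le_pow_mul
    (hlip : ∀ p q a, P p → P q → Q a → D (U p a) (U q a) ≤ C * D p q)
    {l : List β} (hl : ∀ a ∈ l, Q a) {p q : α} (hp : P p) (hq : P q) :
    D (l.foldl U p) (l.foldl U q) ≤ C ^ l.length * D p q := by
  induction l generalizing p q with
  | nil => simp
  | cons a l ih =>
    obtain ⟨ha, hl⟩ := List.forall_mem_cons.1 hl
    calc D (l.foldl U (U p a)) (l.foldl U (U q a))
        ≤ C ^ l.length * D (U p a) (U q a) := ih hl (hU p a hp ha) (hU q a hq ha)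
      _ ≤ C ^ l.length * (C * D p q) := by gcongr; exact hlip p q a hp hq ha
      _ = C ^ (a :: l).length * D p q := by rw [List.length_cons, pow_succ, mul_assoc]

variable (hD_refl : ∀ p, P p → D p p = 0) (hB : ∀ p a, P p → Q a → P (B p a))
  (happrox : ∀ p q a, P p → P q → Q a → D (U p a) (B q a) ≤ C * D p q + ε)

include hD_refl hB happrox

theorem discrepancy_update_update_exact_le {p : α} {a b : β} (hp : P p) (ha : Q a) (hb : Q b) :
    D (U (U p a) b) (B (B p a) b) ≤ (C + 1) * ε := by
  have one_step : D (U p a) (B p a) ≤ ε := by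
    simpa only [hD_refl p hp, mul_zero, zero_add] using happrox p p a hp hp ha
  calc D (U (U p a) b) (B (B p a) b)
      ≤ C * D (U p a) (B p a) + ε := happrox _ _ b (hU p a hp ha) (hB p a hp ha) hb
    _ ≤ C * ε + ε := by gcongr
    _ = (C + 1) * ε := by ring

variable (hD_symm : ∀ p q, P p → P q → D p q = D q p)
  (hD_tri : ∀ p q r, P p → P q → P r → D p q ≤ D p r + D r q)
  (hB_comm : ∀ p a b, P p → Q a → Q b → B (B p a) b = B (B p b) a)

include hD_symm hD_tri hB_comm

theorem discrepancy_update_update_comm_le {p : α} {a b : β} (hp : P p) (ha : Q a) (hb : Q b) :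
    D (U (U p a) b) (U (U p b) a) ≤ 2 * ((C + 1) * ε) := by
  have hUU {a b : β} (ha : Q a) (hb : Q b) : P (U (U p a) b) := hU _ b (hU p a hp ha) hb
  have hBB : P (B (B p a) b) := hB _ b (hB p a hp ha) hb
  have error {a b : β} (ha : Q a) (hb : Q b) :=
    discrepancy_update_update_exact_le hC hU hD_refl hB happrox hp ha hb
  calc D (U (U p a) b) (U (U p b) a)
      ≤ D (U (U p a) b) (B (B p a) b) + D (B (B p a) b) (U (U p b) a) :=
        hD_tri _ _ _ (hUU ha hb) (hUU hb ha) hBB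
    _ = D (U (U p a) b) (B (B p a) b) + D (U (U p b) a) (B (B p b) a) := by
        rw [hD_symm _ _ hBB (hUU hb ha), hB_comm p a b hp ha hb]
    _ ≤ (C + 1) * ε + (C + 1) * ε := add_le_add (error ha hb) (error hb ha)
    _ = 2 * ((C + 1) * ε) := (two_mul _).symm

theorem discrepancy_foldl_swap_le
    (hlip : ∀ p q a, P p → P q → Q a → D (U p a) (U q a) ≤ C * D p q)
    {l₁ l₂ : List β} {a b : β} (hl : ∀ c ∈ l₁ ++ a :: b :: l₂, Q c) {p : α} (hp : P p) :
    D ((l₁ ++ a :: b :: l₂).foldl U p) ((l₁ ++ b :: a :: l₂).foldl U p) ≤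
      C ^ l₂.length * (2 * ((C + 1) * ε)) := by
  simp only [List.forall_mem_append, List.forall_mem_cons] at hl
  obtain ⟨hl₁, ha, hb, hl₂⟩ := hl
  simp only [List.foldl_append, List.foldl_cons]
  set q := l₁.foldl U p
  have hq : P q := List.foldlRecOn l₁ U hp fun r hr c hc => hU r c hr (hl₁ c hc)
  calc D (l₂.foldl U (U (U q a) b)) (l₂.foldl U (U (U q b) a))
      ≤ C ^ l₂.length * D (U (U q a) b) (U (U q b) a) :=
        discrepancy_foldl_le_pow_mul hC hU hlip hl₂
          (hU _ b (hU q a hq ha) hb) (hU _ a (hU q b hq hb) ha)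
    _ ≤ C ^ l₂.length * (2 * ((C + 1) * ε)) := by
        gcongr
        exact discrepancy_update_update_comm_le hC hU hD_refl hB happrox hD_symm hD_tri hB_comm
          hq ha hb

end ApproximateUpdates

section AdjacentSwap

variable {β : Type*} {n i : ℕ} (f : Fin n → β) (hi : i + 1 < n)

theorem ofFn_eq_take_append_cons_cons_drop :
    List.ofFn f = (List.ofFn f).take i ++
      f ⟨i, Nat.lt_of_succ_lt hi⟩ :: f ⟨i + 1, hi⟩ :: (List.ofFn f).drop (i + 2) := by
  conv_lhs => rw [← List.take_append_drop i (List.ofFn f),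
    List.drop_eq_getElem_cons (by simp; omega), List.drop_eq_getElem_cons (by simpa using hi)]
  simp only [List.getElem_ofFn]

theorem ofFn_swap_eq_take_append_cons_cons_drop :
    (List.ofFn fun t => f (Equiv.swap ⟨i, Nat.lt_of_succ_lt hi⟩ ⟨i + 1, hi⟩ t)) =
      (List.ofFn f).take i ++
        f ⟨i + 1, hi⟩ :: f ⟨i, Nat.lt_of_succ_lt hi⟩ :: (List.ofFn f).drop (i + 2) := by
  set σ := Equiv.swap (⟨i, Nat.lt_of_succ_lt hi⟩ : Fin n) ⟨i + 1, hi⟩ with hσ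
  have swap_of_ne (t : Fin n) (h : t.1 ≠ i) (h' : t.1 ≠ i + 1) : σ t = t :=
    Equiv.swap_apply_of_ne_of_ne (Fin.ne_of_val_ne h) (Fin.ne_of_val_ne h')
  have take_eq : (List.ofFn fun t => f (σ t)).take i = (List.ofFn f).take i := by
    refine List.ext_getElem (by simp) fun k hk _ => ?_
    have : k < i := by simp at hk; omega
    simp only [List.getElem_take, List.getElem_ofFn]
    rw [swap_of_ne _ (by simp; omega) (by simp; omega)]
  have drop_eq : (List.ofFn fun t => f (σ t)).drop (i + 2) = (List.ofFn f).drop (i + 2) := by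
    refine List.ext_getElem (by simp) fun k _ _ => ?_
    simp only [List.getElem_drop, List.getElem_ofFn]
    rw [swap_of_ne _ (by simp; omega) (by simp; omega)]
  rw [ofFn_eq_take_append_cons_cons_drop (fun t => f (σ t)) hi, take_eq, drop_eq, hσ,
    Equiv.swap_apply_left, Equiv.swap_apply_right]

end AdjacentSwap

section Loss

variable {X : Type*} [MeasurableSpace X]

/-- The loss functions by which states are updated, on an arbitrary measurable space: measurable
and everywhere nonnegative, so that `e^{-L}` is integrable against every finite measure. -/
def IsLoss (L : X → ℝ) : Prop :=
  Measurable L ∧ ∀ x, 0 ≤ L x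

theorem IsLoss.integrable_exp_neg {L : X → ℝ} (hL : IsLoss L) (p : Measure X)
    [IsFiniteMeasure p] : Integrable (fun x => Real.exp (-L x)) p :=
  .of_bound hL.1.neg.exp.aestronglyMeasurable 1 <| .of_forall fun x => by
    simpa [Real.abs_exp] using hL.2 x

theorem particleFilter_adjacent_swap_general
    {D : Measure X → Measure X → ℝ}
    (hD_symm : ∀ p q, IsProbabilityMeasure p → IsProbabilityMeasure q → D p q = D q p)
    (hD_tri : ∀ p q r, IsProbabilityMeasure p → IsProbabilityMeasure q →
      IsProbabilityMeasure r → D p q ≤ D p r + D r q)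
    (hD_refl : ∀ p, IsProbabilityMeasure p → D p p = 0)
    {U : Measure X → (X → ℝ) → Measure X}
    (hU_prob : ∀ p L, IsProbabilityMeasure p → IsLoss L → IsProbabilityMeasure (U p L))
    {C ε : ℝ} (hC : 0 ≤ C)
    (hlip : ∀ p q L, IsProbabilityMeasure p → IsProbabilityMeasure q → IsLoss L →
      D (U p L) (U q L) ≤ C * D p q)
    (happrox : ∀ phat p L, IsProbabilityMeasure phat → IsProbabilityMeasure p → IsLoss L →
      D (U phat L) (p.tilted fun x => -L x) ≤ C * D phat p + ε)
    {phat : Measure X} (hphat : IsProbabilityMeasure phat)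
    {T : ℕ} {L : Fin T → X → ℝ} (hL : ∀ t, IsLoss (L t)) {i : ℕ} (hi : i + 1 < T) :
    D (List.foldl U phat (List.ofFn L))
        (List.foldl U phat
          (List.ofFn fun t => L (Equiv.swap ⟨i, Nat.lt_of_succ_lt hi⟩ ⟨i + 1, hi⟩ t))) ≤
      C ^ (T - (i + 2)) * (2 * ((C + 1) * ε)) := by
  have exact_prob (p : Measure X) (M : X → ℝ) (_ : IsProbabilityMeasure p) (hM : IsLoss M) :
      IsProbabilityMeasure (p.tilted fun x => -M x) :=
    isProbabilityMeasure_tilted (hM.integrable_exp_neg p)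
  have exact_comm (p : Measure X) (M N : X → ℝ) (_ : IsProbabilityMeasure p) (hM : IsLoss M)
      (hN : IsLoss N) : (p.tilted fun x => -M x).tilted (fun x => -N x) =
        (p.tilted fun x => -N x).tilted fun x => -M x :=
    tilted_comm (hM.integrable_exp_neg p) (hN.integrable_exp_neg p)
  have losses : ∀ M ∈ List.ofFn L, IsLoss M := List.forall_mem_ofFn_iff.2 hL
  rw [ofFn_eq_take_append_cons_cons_drop L hi] at losses
  have bound := discrepancy_foldl_swap_le hC hU_prob hD_refl exact_prob happrox hD_symm hD_tri
    exact_comm hlip losses hphat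
  rwa [← ofFn_eq_take_append_cons_cons_drop, ← ofFn_swap_eq_take_append_cons_cons_drop,
    List.length_drop, List.length_ofFn] at bound

end Loss

theorem pow_mul_two_mul_le {C ε : ℝ} (hC : 1 < C) (hε : 0 ≤ ε) {m n : ℕ} (hmn : m ≤ n) :
    C ^ m * (2 * ((C + 1) * ε)) ≤ 2 * ε * C ^ n * (C ^ 2 - 1) / (C - 1) := by
  have hC₁ : C - 1 ≠ 0 := sub_ne_zero.2 hC.ne'
  calc C ^ m * (2 * ((C + 1) * ε)) ≤ C ^ n * (2 * ((C + 1) * ε)) := by gcongr; exact hC.le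
    _ = 2 * ε * C ^ n * (C ^ 2 - 1) / (C - 1) := by field_simp; ring

/-- Swapping two adjacent losses in a sequence of `T ≥ 2` losses changes the
particle-filter output by at most `2ε·C^{T−2}·(C² − 1)/(C − 1)`. (Losses are indexed
`0, …, T−1` here; the swapped pair is `L i, L (i+1)` with `i+1 < T`.) -/
theorem particleFilter_adjacent_swap
    {d : ℕ}
    -- discrepancy measure `D` on the space `Ω` of Borel probability measures on `ℝ^d`
    (D : Measure (EuclideanSpace ℝ (Fin d)) → Measure (EuclideanSpace ℝ (Fin d)) → ℝ)
    (hD_nonneg : ∀ p q, IsProbabilityMeasure p → IsProbabilityMeasure q → 0 ≤ D p q)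
    (hD_symm : ∀ p q, IsProbabilityMeasure p → IsProbabilityMeasure q → D p q = D q p)
    (hD_tri : ∀ p q r, IsProbabilityMeasure p → IsProbabilityMeasure q →
      IsProbabilityMeasure r → D p q ≤ D p r + D r q)
    (hD_refl : ∀ p, IsProbabilityMeasure p → D p p = 0)
    -- particle-filter update `U`, sending `phat ∈ Ω` and a loss `L` to `U phat L ∈ Ω`
    (U : Measure (EuclideanSpace ℝ (Fin d)) → (EuclideanSpace ℝ (Fin d) → ℝ) →
      Measure (EuclideanSpace ℝ (Fin d)))
    (hU_prob : ∀ p L, IsProbabilityMeasure p → Measurable L → (∀ x, 0 ≤ L x) →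
      IsProbabilityMeasure (U p L))
    -- constants
    (C ε : ℝ) (hC : 1 < C) (hε : 0 ≤ ε)
    -- assumption (6)
    (h6 : ∀ p q L, IsProbabilityMeasure p → IsProbabilityMeasure q → Measurable L →
      (∀ x, 0 ≤ L x) → D (U p L) (U q L) ≤ C * D p q)
    -- assumption (7)
    (h7 : ∀ phat p L, IsProbabilityMeasure phat → IsProbabilityMeasure p → Measurable L →
      (∀ x, 0 ≤ L x) → 0 < ∫ x, Real.exp (-(L x)) ∂p →
      D (U phat L) (bayesUpdate p L) ≤ C * D phat p + ε)
    -- a probability measure and `T ≥ 2` losses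
    (phat : Measure (EuclideanSpace ℝ (Fin d))) (hphat : IsProbabilityMeasure phat)
    {T : ℕ} (hT : 2 ≤ T)
    (L : Fin T → EuclideanSpace ℝ (Fin d) → ℝ)
    (hmeas : ∀ t, Measurable (L t)) (hnonneg : ∀ t x, 0 ≤ L t x)
    -- the relevant Bayes updates are well defined
    (hwd : ∀ t : Fin T, ∀ q : Measure (EuclideanSpace ℝ (Fin d)), IsProbabilityMeasure q →
      0 < ∫ x, Real.exp (-(L t x)) ∂q)
    -- the index of the swapped adjacent pair
    (i : ℕ) (hi : i + 1 < T) :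
    D (List.foldl U phat (List.ofFn L))
        (List.foldl U phat
          (List.ofFn fun t =>
            L (Equiv.swap (⟨i, Nat.lt_of_succ_lt hi⟩ : Fin T) (⟨i + 1, hi⟩ : Fin T) t))) ≤
      2 * ε * C ^ (T - 2) * (C ^ 2 - 1) / (C - 1) :=
  (particleFilter_adjacent_swap_general hD_symm hD_tri hD_refl
    (fun p M hp hM => hU_prob p M hp hM.1 hM.2) (zero_le_one.trans hC.le)
    (fun p q M hp hq hM => h6 p q M hp hq hM.1 hM.2)
    (fun p q M hp hq hM => bayesUpdate_eq_tilted q M ▸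
      h7 p q M hp hq hM.1 hM.2 (integral_exp_pos (hM.integrable_exp_neg q)))
    hphat (fun t => ⟨hmeas t, hnonneg t⟩) hi).trans
    (pow_mul_two_mul_le hC hε (by omega))
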